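/- Let A be a ring such that the finitely presented right A-modules form an abelian category (i.e. kernels of maps between finitely presented modules are finitely presented; e.g. A right Noetherian). Let M be an endofinite A-module and Z a finitely presented A-module. Then Z belongs to the additive locus of χ_M (that is, χ_M(X) − χ_M(Y) + χ_M(Z) = 0 for every short exact sequence 0 → X → Y → Z → 0 of finitely presented A-modules) if and only if Ext¹_A(Z, M) = 0. -/

import Mathlib

/-- The composition length of a module (the length of a composition series,
zero if none exists). -/
noncomputable def compLength (R : Type) [Ring R] (M : Type) [AddCommGroup M] [Module R M] : ℕ := by
  classical
  exact if h : ∃ s : CompositionSeries (Submodule R M), s.head = ⊥ ∧ s.last = ⊤ then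
    h.choose.length else 0

/-- A module `M` is endofinite if it has finite composition length over its
endomorphism ring, which acts on `M` by application. -/
def IsEndofinite (A : Type) [Ring A] (M : Type) [AddCommGroup M] [Module A M] : Prop :=
  IsFiniteLength (Module.End A M) M

/-- The subadditive function `χ_M` associated to a module `M`:
`χ_M(X) = ℓ_{End_A(M)} Hom_A(X, M)`, where `End_A(M)` acts by postcomposition. -/
noncomputable def chiMod (A : Type) [Ring A] (M : Type) [AddCommGroup M] [Module A M]
    (X : Type) [AddCommGroup X] [Module A X] : ℕ :=
  compLength (Module.End A M) (X →ₗ[A] M)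

/-- A subadditive function on the finitely presented `A`-modules: it depends only on
the isomorphism class, is additive on direct sums, and satisfies
`χ(X) + χ(Z) ≥ χ(Y)` for every exact sequence `X → Y → Z → 0`. -/
def IsSubadditive (A : Type) [Ring A]
    (χ : (X : Type) → [AddCommGroup X] → [Module A X] → ℕ) : Prop :=
  (∀ (X Y : Type) [AddCommGroup X] [Module A X] [AddCommGroup Y] [Module A Y],
      Module.FinitePresentation A X → Module.FinitePresentation A Y →
      (X ≃ₗ[A] Y) → χ X = χ Y) ∧
  (∀ (X Y : Type) [AddCommGroup X] [Module A X] [AddCommGroup Y] [Module A Y],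
      Module.FinitePresentation A X → Module.FinitePresentation A Y →
      χ (X × Y) = χ X + χ Y) ∧
  (∀ (X Y Z : Type) [AddCommGroup X] [Module A X] [AddCommGroup Y] [Module A Y]
      [AddCommGroup Z] [Module A Z],
      Module.FinitePresentation A X → Module.FinitePresentation A Y →
      Module.FinitePresentation A Z →
      ∀ (f : X →ₗ[A] Y) (g : Y →ₗ[A] Z),
      Function.Exact f g → Function.Surjective g → χ Y ≤ χ X + χ Z)

/-- Membership in the additive locus `Adloc(χ)`: `Z` is finitely presented and
`χ(X) - χ(Y) + χ(Z) = 0` for every short exact sequence `0 → X → Y → Z → 0` of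
finitely presented modules. -/
def MemAdloc (A : Type) [Ring A]
    (χ : (X : Type) → [AddCommGroup X] → [Module A X] → ℕ)
    (Z : Type) [AddCommGroup Z] [Module A Z] : Prop :=
  Module.FinitePresentation A Z ∧
  ∀ (X Y : Type) [AddCommGroup X] [Module A X] [AddCommGroup Y] [Module A Y],
    Module.FinitePresentation A X → Module.FinitePresentation A Y →
    ∀ (f : X →ₗ[A] Y) (g : Y →ₗ[A] Z),
    Function.Injective f → Function.Exact f g → Function.Surjective g →
    χ X + χ Z = χ Y

/-- The hypothesis that the finitely presented `A`-modules form an abelian category: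
kernels of maps between finitely presented modules are finitely presented. -/
def FpAbelian (A : Type) [Ring A] : Prop :=
  ∀ (X Y : Type) [AddCommGroup X] [Module A X] [AddCommGroup Y] [Module A Y],
    Module.FinitePresentation A X → Module.FinitePresentation A Y →
    ∀ f : X →ₗ[A] Y, Module.FinitePresentation A (LinearMap.ker f)

theorem compLength_coe (R : Type) [Ring R] (M : Type) [AddCommGroup M] [Module R M]
    (h : IsFiniteLength R M) : (compLength R M : ℕ∞) = Module.length R M := by
  have h' := isFiniteLength_iff_exists_compositionSeries.mp h
  unfold compLength
  rw [dif_pos h']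
  exact Module.length_compositionSeries _ h'.choose_spec.1 h'.choose_spec.2

theorem finLen_hom (A : Type) [Ring A] (M : Type) [AddCommGroup M] [Module A M]
    (hM : IsEndofinite A M) (X : Type) [AddCommGroup X] [Module A X] (hX : Module.Finite A X) :
    IsFiniteLength (Module.End A M) (X →ₗ[A] M) := by
  obtain ⟨n, s, hs⟩ := Module.Finite.exists_fin (R := A) (M := X)
  let ev : (X →ₗ[A] M) →ₗ[Module.End A M] (Fin n → M) :=
    { toFun := fun f i => f (s i)
      map_add' := fun f g => by ext i; simp
      map_smul' := fun r f => by ext i; simp }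
  have h1 : IsFiniteLength (Module.End A M) (Fin n → M) := by
    have := isFiniteLength_iff_isNoetherian_isArtinian.mp hM
    obtain ⟨_, _⟩ := this
    exact isFiniteLength_iff_isNoetherian_isArtinian.mpr ⟨inferInstance, inferInstance⟩
  refine h1.of_injective (f := ev) ?_
  intro f g hfg
  apply LinearMap.ext_on_range (v := s) hs
  intro i
  exact congrFun hfg i

/-- restriction along a map, as a map of modules over the endomorphism ring -/
def preComp (A : Type) [Ring A] (M : Type) [AddCommGroup M] [Module A M]
    {X Y : Type} [AddCommGroup X] [Module A X] [AddCommGroup Y] [Module A Y] (f : X →ₗ[A] Y) :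
    (Y →ₗ[A] M) →ₗ[Module.End A M] (X →ₗ[A] M) where
  toFun h := h.comp f
  map_add' _ _ := rfl
  map_smul' _ _ := rfl

theorem chi_add_iff (A : Type) [Ring A] (M : Type) [AddCommGroup M] [Module A M]
    (hM : IsEndofinite A M)
    (X Y Z : Type) [AddCommGroup X] [Module A X] [AddCommGroup Y] [Module A Y]
    [AddCommGroup Z] [Module A Z] (hX : Module.Finite A X) (hY : Module.Finite A Y)
    (hZ : Module.Finite A Z) (f : X →ₗ[A] Y) (g : Y →ₗ[A] Z)
    (hfg : Function.Exact f g) (hg : Function.Surjective g) :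
    chiMod A M X + chiMod A M Z = chiMod A M Y ↔ ∀ h : X →ₗ[A] M, ∃ k : Y →ₗ[A] M, k.comp f = h := by
  have lX := finLen_hom A M hM X hX
  have lY := finLen_hom A M hM Y hY
  have lZ := finLen_hom A M hM Z hZ
  have eX := compLength_coe _ _ lX
  have eY := compLength_coe _ _ lY
  have eZ := compLength_coe _ _ lZ
  obtain ⟨nX, aX⟩ := isFiniteLength_iff_isNoetherian_isArtinian.mp lX
  have hinj : Function.Injective (preComp A M g) := by
    intro a b hab
    ext z
    obtain ⟨y, rfl⟩ := hg z
    exact LinearMap.congr_fun hab y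
  have hex : Function.Exact (preComp A M g) (preComp A M f) := by
    intro h
    constructor
    · intro h0
      have : ∀ y, g y = 0 → h y = 0 := by
        intro y hy
        obtain ⟨x, rfl⟩ := (hfg y).mp hy
        exact LinearMap.congr_fun h0 x
      have hk : LinearMap.ker g ≤ LinearMap.ker h := fun y hy => this y hy
      refine ⟨((LinearMap.ker g).liftQ h hk).comp
        (g.quotKerEquivOfSurjective hg).symm.toLinearMap, ?_⟩
      ext y
      change (LinearMap.ker g).liftQ h hk ((g.quotKerEquivOfSurjective hg).symm (g y)) = h y
      have : (g.quotKerEquivOfSurjective hg).symm (g y) = (LinearMap.ker g).mkQ y := by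
        rw [LinearEquiv.symm_apply_eq]; rfl
      rw [this]; simp
    · rintro ⟨k, rfl⟩
      ext x
      change k (g (f x)) = 0
      rw [hfg.apply_apply_eq_zero]; simp
  have hex' : Function.Exact (preComp A M g) (preComp A M f).rangeRestrict := by
    intro h
    rw [← hex h]
    exact Subtype.ext_iff
  have key := Module.length_eq_add_of_exact (preComp A M g) (preComp A M f).rangeRestrict hinj
    (preComp A M f).surjective_rangeRestrict hex'
  have hsurj : (∀ h : X →ₗ[A] M, ∃ k : Y →ₗ[A] M, k.comp f = h) ↔
      LinearMap.range (preComp A M f) = ⊤ := by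
    rw [LinearMap.range_eq_top]; rfl
  rw [hsurj]
  have hcast : chiMod A M X + chiMod A M Z = chiMod A M Y ↔
      Module.length (Module.End A M) (X →ₗ[A] M) + Module.length (Module.End A M) (Z →ₗ[A] M)
        = Module.length (Module.End A M) (Y →ₗ[A] M) := by
    rw [← eX, ← eY, ← eZ]
    unfold chiMod
    norm_cast
  rw [hcast, key, add_comm (Module.length _ (Z →ₗ[A] M))]
  have hZt : Module.length (Module.End A M) (Z →ₗ[A] M) ≠ ⊤ := Module.length_ne_top_iff.mpr lZ
  rw [(ENat.addLECancellable_of_ne_top hZt).inj_left]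
  constructor
  · intro h
    by_contra hne
    exact absurd h (Submodule.length_lt hne).ne'
  · intro h
    rw [h, Module.length_top]

theorem ext_of_proj (A : Type) [Ring A] (M : Type) [AddCommGroup M] [Module A M]
    (F X Y Z : Type) [AddCommGroup F] [Module A F] [Module.Projective A F]
    [AddCommGroup X] [Module A X] [AddCommGroup Y] [Module A Y]
    [AddCommGroup Z] [Module A Z] (p : F →ₗ[A] Z) 
    (H : ∀ h : LinearMap.ker p →ₗ[A] M, ∃ k : F →ₗ[A] M, k.comp (LinearMap.ker p).subtype = h)
    (f : X →ₗ[A] Y) (g : Y →ₗ[A] Z) (hf : Function.Injective f)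
    (hfg : Function.Exact f g) (hg : Function.Surjective g) (hp : Function.Surjective p)
    (h : X →ₗ[A] M) : ∃ k : Y →ₗ[A] M, k.comp f = h := by
  obtain ⟨q, hq⟩ := Module.projective_lifting_property g p hg
  have hq' : ∀ x, g (q x) = p x := LinearMap.congr_fun hq
  let e := LinearEquiv.ofInjective f hf
  have he : ∀ w, f (e.symm w) = w := fun w => congrArg Subtype.val (e.apply_symm_apply w)
  let r : LinearMap.ker p →ₗ[A] X := e.symm.toLinearMap.comp
    ((q.comp (LinearMap.ker p).subtype).codRestrict (LinearMap.range f) (by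
      intro c
      apply (hfg _).mp
      exact (hq' c).trans c.2))
  have hr : ∀ c, f (r c) = q c := fun c => he _
  obtain ⟨φ, hφ⟩ := H (h.comp r)
  have hφ' : ∀ c : LinearMap.ker p, φ c = h (r c) := LinearMap.congr_fun hφ
  let s : (X × F) →ₗ[A] Y := f.coprod q
  let t : (X × F) →ₗ[A] M := h.coprod φ
  have hs : Function.Surjective s := by
    intro y
    obtain ⟨c, hc⟩ := hp (g y)
    obtain ⟨x, hx⟩ := (hfg (y - q c)).mp (by rw [map_sub, hq', hc, sub_self])
    exact ⟨(x, c), by simp [s, hx]⟩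
  have hk : LinearMap.ker s ≤ LinearMap.ker t := by
    rintro ⟨x, c⟩ hxc
    have h1 : f x + q c = 0 := hxc
    have hc : p c = 0 := by
      rw [← hq', eq_neg_of_add_eq_zero_right h1, map_neg, hfg.apply_apply_eq_zero, neg_zero]
    have h2 : x = - r ⟨c, hc⟩ := by
      apply hf
      rw [map_neg, hr]
      exact eq_neg_of_add_eq_zero_left h1
    have h3 := hφ' ⟨c, hc⟩
    change h x + φ c = 0
    rw [h2, map_neg]
    rw [← h3]; simp
  refine ⟨((LinearMap.ker s).liftQ t hk).comp
        (s.quotKerEquivOfSurjective hs).symm.toLinearMap, ?_⟩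
  ext x
  change (LinearMap.ker s).liftQ t hk ((s.quotKerEquivOfSurjective hs).symm (f x)) = h x
  have : (s.quotKerEquivOfSurjective hs).symm (f x) = (LinearMap.ker s).mkQ (x, 0) := by
    rw [LinearEquiv.symm_apply_eq]
    change f x = s (x, 0)
    simp [s]
  rw [this]; simp [t]

theorem cocycle_iff (A : Type) [Ring A] (M : Type) [AddCommGroup M] [Module A M]
    (P2 P1 P0 Z : Type) [AddCommGroup P2] [Module A P2] [AddCommGroup P1] [Module A P1]
    [AddCommGroup P0] [Module A P0] [AddCommGroup Z] [Module A Z]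
    (d2 : P2 →ₗ[A] P1) (d1 : P1 →ₗ[A] P0) (p : P0 →ₗ[A] Z) (h21 : Function.Exact d2 d1)
    (h10 : Function.Exact d1 p) :
    (∀ φ : P1 →ₗ[A] M, φ.comp d2 = 0 → ∃ ψ : P0 →ₗ[A] M, ψ.comp d1 = φ) ↔
    ∀ h : LinearMap.ker p →ₗ[A] M, ∃ k : P0 →ₗ[A] M, k.comp (LinearMap.ker p).subtype = h := by
  let d : P1 →ₗ[A] LinearMap.ker p := d1.codRestrict _ h10.apply_apply_eq_zero
  have hd : Function.Surjective d := by
    rintro ⟨x, hx⟩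
    obtain ⟨y, hy⟩ := (h10 x).mp hx
    exact ⟨y, Subtype.ext hy⟩
  constructor
  · intro H h
    obtain ⟨ψ, hψ⟩ := H (h.comp d) (by
      ext x
      have : d (d2 x) = 0 := Subtype.ext (h21.apply_apply_eq_zero x)
      change h (d (d2 x)) = 0
      rw [this, map_zero])
    refine ⟨ψ, ?_⟩
    ext c
    obtain ⟨y, rfl⟩ := hd c
    exact LinearMap.congr_fun hψ y
  · intro H φ hφ
    have hk : LinearMap.ker d ≤ LinearMap.ker φ := by
      intro x hx
      obtain ⟨y, rfl⟩ := (h21 x).mp (congrArg Subtype.val hx)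
      exact LinearMap.congr_fun hφ y
    obtain ⟨k, hk2⟩ := H (((LinearMap.ker d).liftQ φ hk).comp
        (d.quotKerEquivOfSurjective hd).symm.toLinearMap)
    refine ⟨k, ?_⟩
    ext x
    have h1 := LinearMap.congr_fun hk2 (d x)
    refine h1.trans ?_
    change (LinearMap.ker d).liftQ φ hk ((d.quotKerEquivOfSurjective hd).symm (d x)) = φ x
    have : (d.quotKerEquivOfSurjective hd).symm (d x) = (LinearMap.ker d).mkQ x := by
      rw [LinearEquiv.symm_apply_eq]; rfl
    rw [this]; simp

open CategoryTheory in
theorem ext_zero_iff (A : Type) [Ring A] (M : Type) [AddCommGroup M] [Module A M]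
    (Z : Type) [AddCommGroup Z] [Module A Z] (P : ProjectiveResolution (ModuleCat.of A Z)) :
    Subsingleton (((Ext ℤ (ModuleCat A) 1).obj
        (Opposite.op (ModuleCat.of A Z))).obj (ModuleCat.of A M)) ↔
    ∀ φ : P.complex.X 1 →ₗ[A] M, φ.comp (P.complex.d 2 1).hom = 0 →
      ∃ ψ : P.complex.X 0 →ₗ[A] M, ψ.comp (P.complex.d 1 0).hom = φ := by
  rw [← ModuleCat.isZero_iff_subsingleton, (P.isoExt (R := ℤ) 1 (ModuleCat.of A M)).isZero_iff,
    ← HomologicalComplex.exactAt_iff_isZero_homology,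
    HomologicalComplex.exactAt_iff' _ 0 1 2 (by simp) (by simp),
    ShortComplex.moduleCat_exact_iff]
  constructor
  · intro H φ hφ
    obtain ⟨ψ, hψ⟩ := H (ModuleCat.ofHom φ : P.complex.X 1 ⟶ ModuleCat.of A M) (by
      change P.complex.d 2 1 ≫ ModuleCat.ofHom φ = 0
      ext x
      exact LinearMap.congr_fun hφ x)
    change P.complex.X 0 ⟶ ModuleCat.of A M at ψ
    change P.complex.d 1 0 ≫ ψ = ModuleCat.ofHom φ at hψ
    refine ⟨ψ.hom, ?_⟩
    exact congrArg ModuleCat.Hom.hom hψ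
  · intro H φ hφ
    change P.complex.X 1 ⟶ ModuleCat.of A M at φ
    change P.complex.d 2 1 ≫ φ = 0 at hφ
    obtain ⟨ψ, hψ⟩ := H φ.hom (congrArg ModuleCat.Hom.hom hφ)
    refine ⟨(ModuleCat.ofHom ψ : P.complex.X 0 ⟶ ModuleCat.of A M), ?_⟩
    change P.complex.d 1 0 ≫ ModuleCat.ofHom ψ = φ
    ext x
    exact LinearMap.congr_fun hψ x

open CategoryTheory in
/-- If the finitely presented `A`-modules form an abelian category, `M` is an
endofinite `A`-module and `Z` is finitely presented, then `Z` lies in the additive locus of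
`χ_M` if and only if `Ext¹_A(Z, M) = 0`. -/
theorem statement1 (A : Type) [Ring A] (hA : FpAbelian A)
    (M : Type) [AddCommGroup M] [Module A M] (hM : IsEndofinite A M)
    (Z : Type) [AddCommGroup Z] [Module A Z] (hZ : Module.FinitePresentation A Z) :
    MemAdloc A (chiMod A M) Z ↔
      Subsingleton (((Ext ℤ (ModuleCat A) 1).obj
        (Opposite.op (ModuleCat.of A Z))).obj (ModuleCat.of A M)) := by
  obtain ⟨P⟩ : Nonempty (ProjectiveResolution (ModuleCat.of A Z)) :=
    ⟨projectiveResolution (ModuleCat.of A Z)⟩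
  let π0 : P.complex.X 0 ⟶ ModuleCat.of A Z := P.π.f 0
  have hπ : Function.Surjective π0.hom := by
    have : Epi π0 := inferInstanceAs (Epi (P.π.f 0))
    exact (ModuleCat.epi_iff_surjective π0).mp this
  have h21 : Function.Exact (P.complex.d 2 1).hom (P.complex.d 1 0).hom :=
    (ShortComplex.ShortExact.moduleCat_exact_iff_function_exact _).mp (P.exact_succ 0)
  have h10 : Function.Exact (P.complex.d 1 0).hom π0.hom :=
    (ShortComplex.ShortExact.moduleCat_exact_iff_function_exact _).mp
      (ShortComplex.exact_of_g_is_cokernel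
        (ShortComplex.mk (P.complex.d 1 0) π0 P.complex_d_comp_π_f_zero)
        P.isColimitCokernelCofork)
  have hproj : Module.Projective A (P.complex.X 0) :=
    (IsProjective.iff_projective _).mpr (P.projective 0)
  rw [ext_zero_iff A M Z P, cocycle_iff A M _ _ _ Z _ _ π0.hom h21 h10]
  constructor
  · rintro ⟨-, H⟩
    obtain ⟨n, p, hp⟩ := Module.Finite.exists_fin' A Z
    have hK := hA (Fin n → A) Z inferInstance hZ p
    have hex : Function.Exact (LinearMap.ker p).subtype p := LinearMap.exact_subtype_ker_map p
    have h1 := (chi_add_iff A M hM (LinearMap.ker p) (Fin n → A) Z inferInstance inferInstance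
      inferInstance _ p hex hp).mp
      (H _ _ hK inferInstance _ p (Submodule.injective_subtype _) hex hp)
    exact ext_of_proj A M (Fin n → A) _ _ Z p h1 _ π0.hom (Submodule.injective_subtype _)
      (LinearMap.exact_subtype_ker_map _) hπ hp
  · intro H
    refine ⟨hZ, ?_⟩
    intro X Y _ _ _ _ hX hY f g hf hfg hg
    exact (chi_add_iff A M hM X Y Z inferInstance inferInstance inferInstance f g hfg hg).mpr
      (ext_of_proj A M _ X Y Z π0.hom H f g hf hfg hg hπ)
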